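/- arXiv:2312.09083 — 2 statements merged into one kernel-verified Lean document; each statement's English description precedes it below -/
import Mathlib

section
/- Let n ≥ 1 and let G ∈ 𝒢_{n,1} be reduced with at least one nontrivial strong component; let n* be the number of α-nodes in the core G*. For every integer j with j > n* and j > d_p − ℓ_p for all p = 1, …, q: (a) V(j + L) = V(j); (b) V⁺_cyc equals the union V(j) ∪ V(j+1) ∪ … ∪ V(j + ℓ_max − 1); (c) for each k ∈ {0, …, ℓ_max − 1}, the set V(j+k) is not contained in the union of the sets V(j+k') over k' ∈ {0, …, ℓ_max − 1} with k' ≠ k (in particular each V(j+k) is nonempty). -/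
open MeasureTheory

/-- Node type for digraphs in `𝒢_{n,1}`: `none` is the control node `β`,
`some i` is the state node `α_i`. -/
abbrev Node (n : ℕ) := Option (Fin n)

/-- `w` is a walk of length `k` from `u` to `v` in the digraph with edge set `E`. -/
def IsWalk {V : Type*} (E : Set (V × V)) (k : ℕ) (w : ℕ → V) (u v : V) : Prop :=
  w 0 = u ∧ w k = v ∧ ∀ t < k, (w t, w (t + 1)) ∈ E

/-- A path is a walk with no repeated node. -/
def IsPath {V : Type*} (E : Set (V × V)) (k : ℕ) (w : ℕ → V) (u v : V) : Prop :=
  IsWalk E k w u v ∧ ∀ s ≤ k, ∀ t ≤ k, w s = w t → s = t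

/-- A cycle of length `k ≥ 1` from `u` to itself, all nodes pairwise distinct except
the coinciding endpoints. -/
def IsCycle {V : Type*} (E : Set (V × V)) (k : ℕ) (w : ℕ → V) (u : V) : Prop :=
  1 ≤ k ∧ IsWalk E k w u u ∧ ∀ s < k, ∀ t < k, w s = w t → s = t

def Reachable {V : Type*} (E : Set (V × V)) (u v : V) : Prop :=
  ∃ k w, IsWalk E k w u v

/-- `u` lies on a cycle of the digraph. -/
def OnCycle {V : Type*} (E : Set (V × V)) (u : V) : Prop :=
  ∃ k w, IsCycle E k w u

def WeaklyConnected {V : Type*} (E : Set (V × V)) : Prop :=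
  ∀ u v : V, ∃ (k : ℕ) (w : ℕ → V), w 0 = u ∧ w k = v ∧
    ∀ t < k, (w t, w (t + 1)) ∈ E ∨ (w (t + 1), w t) ∈ E

/-- Membership in the class `𝒢_{n,1}`: no edge ends at `β` and the digraph is
weakly connected. -/
def MemG (n : ℕ) (E : Set (Node n × Node n)) : Prop :=
  (∀ e ∈ E, e.2 ≠ (none : Node n)) ∧ WeaklyConnected E

/-- `V⁺_cyc`: nodes reachable by a walk from some node lying on a cycle. -/
def CycSucc {V : Type*} (E : Set (V × V)) : Set V :=
  {v | ∃ u, OnCycle E u ∧ Reachable E u v}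

/-- The node set of the core relative to a node set `N`: `N \ V⁺_cyc`. -/
def CoreOn {W : Type*} (N : Set W) (F : Set (W × W)) : Set W := N \ CycSucc F

/-- The node set `V*` of the core `G*` of `G`. -/
def CoreNodes (n : ℕ) (E : Set (Node n × Node n)) : Set (Node n) :=
  CoreOn Set.univ E

/-- The core of `G` contains a directed spanning path: a path of `G` whose node set
is exactly `V*`. -/
def HasCoreSpanningPath (n : ℕ) (E : Set (Node n × Node n)) : Prop :=
  ∃ (k : ℕ) (w : ℕ → Node n) (u v : Node n), IsPath E k w u v ∧
    {x | ∃ t ≤ k, w t = x} = CoreNodes n E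

/-- A compliant pair `(A, b) ∈ 𝕍(G)`: bounded continuous, with the sparsity
pattern dictated by the edge set `E`. -/
def Compliant {n : ℕ} {S : Type*} [TopologicalSpace S] (E : Set (Node n × Node n))
    (A : S → Fin n → Fin n → ℝ) (b : S → Fin n → ℝ) : Prop :=
  Continuous A ∧ Continuous b ∧
  (∃ C, ∀ σ i j, |A σ i j| ≤ C) ∧ (∃ C, ∀ σ i, |b σ i| ≤ C) ∧
  (∀ σ (i j : Fin n), ((some j : Node n), (some i : Node n)) ∉ E → A σ i j = 0) ∧
  (∀ σ (i : Fin n), ((none : Node n), (some i : Node n)) ∉ E → b σ i = 0)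

/-- The averaged-controllability rank criterion: the span of the Bochner integrals
`∫ A(σ)^k b(σ) dμ`, `k ∈ ℕ`, is all of `ℝⁿ`. -/
def RankCriterion {n : ℕ} {S : Type*} [MeasurableSpace S]
    (μ : Measure S) (A : S → Fin n → Fin n → ℝ) (b : S → Fin n → ℝ) : Prop :=
  Submodule.span ℝ {x : Fin n → ℝ |
    ∃ k : ℕ, x = ∫ σ, (Matrix.of (A σ) ^ k).mulVec (b σ) ∂μ} = ⊤

/-- `S` is a topological manifold of dimension `d`. -/
def IsTopManifold (d : ℕ) (S : Type*) [TopologicalSpace S] : Prop :=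
  ∀ x : S, ∃ U : Set S, IsOpen U ∧ x ∈ U ∧
    ∃ W : Set (EuclideanSpace ℝ (Fin d)), IsOpen W ∧ Nonempty (↥U ≃ₜ ↥W)

/-- The support of `μ` contains a nonempty open set. -/
def SupportHasOpen {S : Type*} [TopologicalSpace S] [MeasurableSpace S]
    (μ : Measure S) : Prop :=
  ∃ U : Set S, IsOpen U ∧ U.Nonempty ∧ ∀ W ⊆ U, IsOpen W → W.Nonempty → 0 < μ W

/-- There is exactly one path from `u` to `v`. -/
def UniquePathFrom {V : Type*} (E : Set (V × V)) (u v : V) : Prop :=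
  (∃ k w, IsPath E k w u v) ∧
  ∀ (k : ℕ) (w : ℕ → V) (k' : ℕ) (w' : ℕ → V),
    IsPath E k w u v → IsPath E k' w' u v → k = k' ∧ ∀ t ≤ k, w t = w' t

/-- A directed tree on the node set `N`: there is a unique root, from which every node
is reachable by a unique path. -/
def IsDirectedTree {W : Type*} (N : Set W) (F : Set (W × W)) : Prop :=
  ∃ r ∈ N, (∀ v ∈ N, UniquePathFrom F r v) ∧
    (∀ r' ∈ N, (∀ v ∈ N, Reachable F r' v) → r' = r)

/-- The strong component of `u`: nodes mutually reachable with `u`. -/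
def StrongComp {V : Type*} (E : Set (V × V)) (u : V) : Set V :=
  {v | Reachable E u v ∧ Reachable E v u}

/-- The nodes of the skeleton graph (condensation): the strong components. -/
def SkelNodes {V : Type*} (E : Set (V × V)) : Set (Set V) :=
  {C | ∃ u, C = StrongComp E u}

/-- The edges of the skeleton graph: `(C, C')` is an edge whenever some edge of `E`
goes from a node of `C` to a node of `C'`. -/
def SkelEdges {V : Type*} (E : Set (V × V)) : Set (Set V × Set V) :=
  {p | p.1 ∈ SkelNodes E ∧ p.2 ∈ SkelNodes E ∧ ∃ u ∈ p.1, ∃ v ∈ p.2, (u, v) ∈ E}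

/-- The induced subgraph on `N` (w.r.t. the ambient edge set `F`) is a directed path:
its nodes can be ordered `w 0, …, w r` so that its edges are exactly the consecutive
pairs. -/
def IsPathGraphOn {W : Type*} (N : Set W) (F : Set (W × W)) : Prop :=
  ∃ (r : ℕ) (w : ℕ → W), (∀ s ≤ r, ∀ t ≤ r, w s = w t → s = t) ∧
    {x | ∃ t ≤ r, w t = x} = N ∧
    (∀ p : W × W, (p ∈ F ∧ p.1 ∈ N ∧ p.2 ∈ N) ↔ ∃ t < r, p = (w t, w (t + 1)))

/-- The induced subgraph on `C` is a single directed cycle: its nodes can be cyclically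
ordered so that its edges are exactly the consecutive pairs. -/
def IsSingleCycleOn {V : Type*} (C : Set V) (E : Set (V × V)) : Prop :=
  ∃ (l : ℕ) (w : ℕ → V), 1 ≤ l ∧ (∀ s < l, ∀ t < l, w s = w t → s = t) ∧
    {x | ∃ t < l, w t = x} = C ∧
    (∀ p : V × V, (p ∈ E ∧ p.1 ∈ C ∧ p.2 ∈ C) ↔ ∃ t < l, p = (w t, w ((t + 1) % l)))

/-- `G ∈ 𝒢_{n,1}` is reduced (Definition 5 of the paper): (1) the skeleton graph `S`
with self-loops removed is a directed tree and the core `S*` of `S` is a directed path;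
(2) every edge of `S` between distinct components comes from a unique edge of `G`;
(3) every node of `S` with a self-loop is an out-neighbor of `S*`, and every nontrivial
strong component of `G` is a single directed cycle. -/
def ReducedGraph (n : ℕ) (E : Set (Node n × Node n)) : Prop :=
  MemG n E ∧
  IsDirectedTree (SkelNodes E) {p ∈ SkelEdges E | p.1 ≠ p.2} ∧
  IsPathGraphOn (CoreOn (SkelNodes E) (SkelEdges E)) (SkelEdges E) ∧
  (∀ p ∈ SkelEdges E, p.1 ≠ p.2 →
    ∃! e : Node n × Node n, e ∈ E ∧ e.1 ∈ p.1 ∧ e.2 ∈ p.2) ∧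
  (∀ C : Set (Node n), (C, C) ∈ SkelEdges E →
    (∃ C' ∈ CoreOn (SkelNodes E) (SkelEdges E), (C', C) ∈ SkelEdges E) ∧
    IsSingleCycleOn C E)

/-- `V(j)`: nodes reachable from `β` by a walk of length `j`. -/
def VSet {n : ℕ} (E : Set (Node n × Node n)) (j : ℕ) : Set (Node n) :=
  {v | ∃ w : ℕ → Node n, IsWalk E j w (none : Node n) v}

/-- `V_p⁺`: nodes reachable by a walk from some node of the component `C`. -/
def VpPlus {n : ℕ} (E : Set (Node n × Node n)) (C : Set (Node n)) : Set (Node n) :=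
  {v | ∃ u ∈ C, Reachable E u v}

/-!
Since every strong component is entered by at most one edge, two walks from a root to the same node
`v` enter the component of `v` through the same edge, and inside a component two walks with common
endpoints close up to closed walks. By induction, the lengths of two walks from the root to `v` are
congruent modulo any common divisor of the lengths of the closed walks that reach `v`. In a reduced
graph these closed walks all run along a single cycle, and every walk to a successor of a cycle
meets that cycle, so it can be prolonged by full turns. Hence, once `k` is large, a successor `v` of
a cycle of length `ℓ` belongs to `V(k)` if and only if `k ≡ dep v [MOD ℓ]`, while no walk of length
`k > n*` ends in the core.
-/

section Walks

variable {V : Type*} {E : Set (V × V)} {k m s t : ℕ} {w : ℕ → V} {u v x : V}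

/-- There is a walk of length `k` from `u` to `v`. Hiding the node sequence of `IsWalk` turns
concatenation and splitting of walks into arithmetic of lengths. -/
def HasWalk (E : Set (V × V)) (k : ℕ) (u v : V) : Prop :=
  ∃ w, IsWalk E k w u v

theorem IsWalk.snoc (h : IsWalk E k w u v) (hvx : (v, x) ∈ E) :
    IsWalk E (k + 1) (fun i => if i ≤ k then w i else x) u x := by
  refine ⟨by simp [h.1], by simp, fun t ht => ?_⟩
  rcases Nat.lt_succ_iff_lt_or_eq.1 ht with htk | rfl
  · simpa [htk.le, Nat.succ_le_of_lt htk] using h.2.2 t htk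
  · simpa [h.2.1] using hvx

theorem IsWalk.hasWalk_of_le (h : IsWalk E k w u v) (hst : s ≤ t) (htk : t ≤ k) :
    HasWalk E (t - s) (w s) (w t) :=
  ⟨fun i => w (s + i), rfl, by simp [Nat.add_sub_cancel' hst],
    fun i hi => h.2.2 (s + i) (by omega)⟩

theorem IsWalk.hasWalk_left (h : IsWalk E k w u v) (htk : t ≤ k) : HasWalk E t u (w t) := by
  simpa [h.1] using h.hasWalk_of_le t.zero_le htk

theorem IsWalk.hasWalk_right (h : IsWalk E k w u v) (htk : t ≤ k) :
    HasWalk E (k - t) (w t) v := by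
  simpa [h.2.1] using h.hasWalk_of_le htk le_rfl

theorem hasWalk_zero : HasWalk E 0 u v ↔ u = v :=
  ⟨fun ⟨_, h0, hk, _⟩ => h0.symm.trans hk,
    fun h => ⟨fun _ => u, rfl, h, fun _ ht => absurd ht (Nat.not_lt_zero _)⟩⟩

theorem hasWalk_succ : HasWalk E (k + 1) u v ↔ ∃ x, HasWalk E k u x ∧ (x, v) ∈ E :=
  ⟨fun ⟨w, h⟩ => ⟨w k, h.hasWalk_left k.le_succ, by simpa [h.2.1] using h.2.2 k k.lt_succ_self⟩,
    fun ⟨_, ⟨_, h⟩, hxv⟩ => ⟨_, h.snoc hxv⟩⟩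

theorem HasWalk.reachable (h : HasWalk E k u v) : Reachable E u v :=
  ⟨k, h⟩

theorem HasWalk.trans (h : HasWalk E k u v) (h' : HasWalk E m v x) : HasWalk E (k + m) u x := by
  induction m generalizing x with
  | zero => exact hasWalk_zero.1 h' ▸ h
  | succ m ih =>
    obtain ⟨y, hy, hyx⟩ := hasWalk_succ.1 h'
    exact hasWalk_succ.2 ⟨y, ih hy, hyx⟩

theorem hasWalk_one_of_mem (h : (u, v) ∈ E) : HasWalk E 1 u v :=
  hasWalk_succ.2 ⟨u, hasWalk_zero.2 rfl, h⟩

theorem HasWalk.mul (h : HasWalk E k u u) (m : ℕ) : HasWalk E (m * k) u u := by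
  induction m with
  | zero => simpa using hasWalk_zero.2 rfl
  | succ m ih => simpa [Nat.succ_mul] using ih.trans h

theorem Reachable.refl (E : Set (V × V)) (u : V) : Reachable E u u :=
  ⟨0, hasWalk_zero.2 rfl⟩

theorem Reachable.of_mem (h : (u, v) ∈ E) : Reachable E u v :=
  (hasWalk_one_of_mem h).reachable

theorem Reachable.trans (h : Reachable E u v) (h' : Reachable E v x) : Reachable E u x := by
  obtain ⟨_, h⟩ := h
  obtain ⟨_, h'⟩ := h'
  exact (HasWalk.trans h h').reachable

end Walks

section Cycles

variable {V : Type*} {E : Set (V × V)} {k : ℕ} {w : ℕ → V} {u v : V}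

-- A shortest closed walk of positive length at `u` is a cycle.
theorem HasWalk.onCycle (h : HasWalk E k u u) (hk : k ≠ 0) : OnCycle E u := by
  classical
  have hex : ∃ k, k ≠ 0 ∧ HasWalk E k u u := ⟨k, hk, h⟩
  obtain ⟨hl, w, hw⟩ := Nat.find_spec hex
  set l := Nat.find hex
  have hne : ∀ s t, s < t → t < l → w s ≠ w t := by
    intro s t hst htl hwst
    have hcut : HasWalk E (s + (l - t)) u u :=
      (hwst ▸ hw.hasWalk_left (by omega)).trans (hw.hasWalk_right htl.le)
    exact Nat.find_min hex (m := s + (l - t)) (by omega) ⟨by omega, hcut⟩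
  refine ⟨l, w, Nat.one_le_iff_ne_zero.2 hl, hw, fun s hs t ht hst => ?_⟩
  exact le_antisymm (not_lt.1 fun hts => hne t s hts hs hst.symm)
    (not_lt.1 fun hlt => hne s t hlt ht hst)

theorem onCycle_iff : OnCycle E u ↔ ∃ v, (u, v) ∈ E ∧ Reachable E v u := by
  constructor
  · rintro ⟨k, w, hk, hw, -⟩
    exact ⟨w 1, by simpa [hw.1] using hw.2.2 0 hk, (hw.hasWalk_right hk).reachable⟩
  · rintro ⟨v, huv, m, hvu⟩
    exact ((hasWalk_one_of_mem huv).trans hvu).onCycle (by omega)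

theorem IsWalk.isPath (h : IsWalk E k w u v) (hv : v ∉ CycSucc E) : IsPath E k w u v := by
  have hne : ∀ s t, s < t → t ≤ k → w s ≠ w t := by
    intro s t hst htk hwst
    have hclosed : HasWalk E (t - s) (w s) (w s) := by
      simpa [← hwst] using h.hasWalk_of_le hst.le htk
    exact hv ⟨w s, hclosed.onCycle (by omega), (h.hasWalk_right (by omega)).reachable⟩
  refine ⟨h, fun s hs t ht hst => ?_⟩
  exact le_antisymm (not_lt.1 fun hts => hne t s hts hs hst.symm)
    (not_lt.1 fun hlt => hne s t hlt ht hst)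

theorem HasWalk.le_encard_core (h : HasWalk E k u v) (hv : v ∉ CycSucc E) :
    (k : ℕ∞) ≤ (CoreOn Set.univ E \ {u}).encard := by
  obtain ⟨w, hw⟩ := h
  have hinj : Set.InjOn w (Set.Ioc 0 k) :=
    fun s hs t ht => (hw.isPath hv).2 s hs.2 t ht.2
  have hcore : w '' Set.Ioc 0 k ⊆ CoreOn Set.univ E \ {u} := by
    rintro _ ⟨t, ⟨ht0, htk⟩, rfl⟩
    refine ⟨⟨trivial, fun ⟨x, hx, hxt⟩ => ?_⟩, fun hwu => ?_⟩
    · exact hv ⟨x, hx, hxt.trans (hw.hasWalk_right htk).reachable⟩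
    · exact ht0.ne' ((hw.isPath hv).2 t htk 0 k.zero_le (hwu.trans hw.1.symm))
  calc (k : ℕ∞) = (Set.Ioc 0 k).encard := by
        rw [← Finset.coe_Ioc, Set.encard_coe_eq_coe_finsetCard, Nat.card_Ioc, Nat.sub_zero]
    _ = (w '' Set.Ioc 0 k).encard := hinj.encard_image.symm
    _ ≤ (CoreOn Set.univ E \ {u}).encard := Set.encard_le_encard hcore

theorem HasWalk.mem_cycSucc (h : HasWalk E k u v) (hk : (CoreOn Set.univ E \ {u}).encard < k) :
    v ∈ CycSucc E := by
  by_contra hv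
  exact (h.le_encard_core hv).not_gt hk

end Cycles

section StrongComponents

variable {V : Type*} {E : Set (V × V)} {C : Set V} {u v : V}

theorem mem_strongComp_self (E : Set (V × V)) (u : V) : u ∈ StrongComp E u :=
  ⟨Reachable.refl E u, Reachable.refl E u⟩

theorem strongComp_eq_of_mem (h : v ∈ StrongComp E u) : StrongComp E v = StrongComp E u :=
  Set.ext fun _ => ⟨fun hx => ⟨h.1.trans hx.1, hx.2.trans h.2⟩,
    fun hx => ⟨h.2.trans hx.1, hx.2.trans h.1⟩⟩

theorem eq_strongComp_of_mem (hC : C ∈ SkelNodes E) (hu : u ∈ C) : C = StrongComp E u := by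
  obtain ⟨x, rfl⟩ := hC
  exact (strongComp_eq_of_mem hu).symm

theorem strongComp_pair_mem_skelEdges (h : (u, v) ∈ E) :
    (StrongComp E u, StrongComp E v) ∈ SkelEdges E :=
  ⟨⟨u, rfl⟩, ⟨v, rfl⟩, u, mem_strongComp_self E u, v, mem_strongComp_self E v, h⟩

theorem onCycle_iff_strongComp_loop :
    OnCycle E u ↔ (StrongComp E u, StrongComp E u) ∈ SkelEdges E := by
  rw [onCycle_iff]
  constructor
  · rintro ⟨v, huv, hvu⟩
    have hv : v ∈ StrongComp E u := ⟨Reachable.of_mem huv, hvu⟩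
    simpa only [strongComp_eq_of_mem hv] using strongComp_pair_mem_skelEdges huv
  · rintro ⟨-, -, a, ⟨⟨s, hua⟩, -⟩, b, ⟨-, ⟨t, hbu⟩⟩, hab⟩
    exact onCycle_iff.1 <| ((HasWalk.trans hua (hasWalk_one_of_mem hab)).trans hbu).onCycle
      (by omega)

theorem OnCycle.of_mem_strongComp (hu : OnCycle E u) (hv : v ∈ StrongComp E u) : OnCycle E v := by
  rwa [onCycle_iff_strongComp_loop, strongComp_eq_of_mem hv, ← onCycle_iff_strongComp_loop]

/-- The length of the cycle through `u`, for `u` in a strong component that is a single cycle;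
encoded as the number of nodes of that component. -/
noncomputable def cycleLength (E : Set (V × V)) (u : V) : ℕ :=
  (StrongComp E u).ncard

theorem ncard_setOf_exists_lt_eq {w : ℕ → V} {l : ℕ}
    (hinj : ∀ s < l, ∀ t < l, w s = w t → s = t) : {x | ∃ t < l, w t = x}.ncard = l := by
  have hinjOn : Set.InjOn w (Set.Iio l) := fun s hs t ht => hinj s hs t ht
  calc {x | ∃ t < l, w t = x}.ncard = (w '' Set.Iio l).ncard := rfl
    _ = (Set.Iio l).ncard := hinjOn.ncard_image
    _ = l := by rw [← Finset.coe_Iio, Set.ncard_coe_finset, Nat.card_Iio]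

theorem IsCycle.cycleLength_eq {l : ℕ} {c : ℕ → V} (h : IsCycle E l c u)
    (hc : {x | ∃ t < l, c t = x} = StrongComp E u) : cycleLength E u = l := by
  rw [cycleLength, ← hc, ncard_setOf_exists_lt_eq h.2.2]

end StrongComponents

section SingleCycle

variable {V : Type*} {E : Set (V × V)} {C : Set V} {k : ℕ} {u : V}

theorem IsSingleCycleOn.exists_periodic (h : IsSingleCycleOn C E) :
    0 < C.ncard ∧ ∃ c : ℕ → V, Set.range c = C ∧
      (∀ i j, c i = c j ↔ i ≡ j [MOD C.ncard]) ∧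
      ∀ i, ∀ x ∈ C, (c i, x) ∈ E ↔ x = c (i + 1) := by
  obtain ⟨l, w, hl, hinj, rfl, hedge⟩ := h
  rw [ncard_setOf_exists_lt_eq hinj]
  have hlt (i : ℕ) : i % l < l := Nat.mod_lt i hl
  refine ⟨hl, fun i => w (i % l), ?_, fun i j => ⟨?_, congrArg w⟩, fun i x hx => ?_⟩
  · ext x
    exact ⟨fun ⟨i, hi⟩ => ⟨i % l, hlt i, hi⟩,
      fun ⟨t, ht, htx⟩ => ⟨t, by simpa only [Nat.mod_eq_of_lt ht] using htx⟩⟩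
  · exact hinj _ (hlt i) _ (hlt j)
  · constructor
    · intro hix
      obtain ⟨t, ht, heq⟩ := (hedge _).1 ⟨hix, ⟨_, hlt i, rfl⟩, hx⟩
      obtain ⟨hwi, rfl⟩ := Prod.ext_iff.1 heq
      simp only [← hinj _ (hlt i) t ht hwi, Nat.mod_add_mod]
    · rintro rfl
      refine ((hedge _).2 ⟨i % l, hlt i, ?_⟩).1
      simp only [Nat.mod_add_mod]

theorem IsSingleCycleOn.exists_hasWalk_iff (h : IsSingleCycleOn (StrongComp E u) E) :
    0 < cycleLength E u ∧ ∃ c : ℕ → V, c 0 = u ∧ (∀ i, c i ∈ StrongComp E u) ∧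
      (∀ i, c i = u ↔ cycleLength E u ∣ i) ∧
      ∀ k, ∀ x ∈ StrongComp E u, HasWalk E k u x ↔ x = c k := by
  obtain ⟨hpos, c, hrange, hmod, hedge⟩ := h.exists_periodic
  obtain ⟨a, rfl⟩ : ∃ a, c a = u := by
    rw [← Set.mem_range, hrange]; exact mem_strongComp_self E u
  have hmem (i : ℕ) : c i ∈ StrongComp E (c a) := hrange ▸ Set.mem_range_self i
  refine ⟨hpos, fun i => c (a + i), rfl, fun i => hmem _, fun i => ?_, fun k => ?_⟩
  · rw [hmod, Nat.add_modEq_left_iff]; rfl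
  · induction k with
    | zero => exact fun x _ => hasWalk_zero.trans eq_comm
    | succ k ih =>
      refine fun x hx => ⟨fun hux => ?_, ?_⟩
      · obtain ⟨y, huy, hyx⟩ := hasWalk_succ.1 hux
        have hy : y ∈ StrongComp E (c a) := ⟨huy.reachable, (Reachable.of_mem hyx).trans hx.2⟩
        obtain rfl := (ih y hy).1 huy
        exact (hedge _ x hx).1 hyx
      · rintro rfl
        exact hasWalk_succ.2 ⟨_, (ih _ (hmem _)).2 rfl, (hedge _ _ (hmem _)).2 rfl⟩

theorem IsSingleCycleOn.cycleLength_pos (h : IsSingleCycleOn (StrongComp E u) E) :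
    0 < cycleLength E u :=
  h.exists_hasWalk_iff.1

theorem IsSingleCycleOn.cycleLength_dvd_iff (h : IsSingleCycleOn (StrongComp E u) E) :
    cycleLength E u ∣ k ↔ HasWalk E k u u := by
  obtain ⟨-, c, -, -, hdvd, hwalk⟩ := h.exists_hasWalk_iff
  rw [hwalk k u (mem_strongComp_self E u), eq_comm, hdvd]

theorem IsSingleCycleOn.exists_hasWalk (h : IsSingleCycleOn (StrongComp E u) E) (k : ℕ) :
    ∃ v ∈ StrongComp E u, HasWalk E k u v := by
  obtain ⟨-, c, -, hmem, -, hwalk⟩ := h.exists_hasWalk_iff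
  exact ⟨c k, hmem k, (hwalk k _ (hmem k)).2 rfl⟩

end SingleCycle

section UniqueEntry

variable {V : Type*} {E : Set (V × V)} {C : Set V} {M k k' : ℕ} {r u v x : V} {e : V × V}

/-- The edges along which a walk can enter the node set `C`. -/
def enteringEdges (E : Set (V × V)) (C : Set V) : Set (V × V) :=
  {e ∈ E | e.1 ∉ C ∧ e.2 ∈ C}

/-- Each strong component is entered by at most one edge, as in a graph whose skeleton is a forest
and whose components are joined by single edges. -/
def UniqueEntry (E : Set (V × V)) : Prop :=
  ∀ u, (enteringEdges E (StrongComp E u)).Subsingleton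

theorem HasWalk.exists_enteringEdge (h : HasWalk E k u v) (hu : u ∉ C) (hv : v ∈ C) :
    ∃ e ∈ enteringEdges E C, ∃ s t, k = s + 1 + t ∧ HasWalk E s u e.1 ∧ HasWalk E t e.2 v := by
  induction k generalizing v with
  | zero => exact absurd (hasWalk_zero.1 h ▸ hv) hu
  | succ k ih =>
    obtain ⟨x, hux, hxv⟩ := hasWalk_succ.1 h
    by_cases hx : x ∈ C
    · obtain ⟨e, he, s, t, rfl, hs, ht⟩ := ih hux hx
      exact ⟨e, he, s, t + 1, rfl, hs, hasWalk_succ.2 ⟨x, ht, hxv⟩⟩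
    · exact ⟨(x, v), ⟨hxv, hx, hv⟩, k, 0, rfl, hux, hasWalk_zero.2 rfl⟩

theorem UniqueEntry.reachable_fst (hE : UniqueEntry E) (he : e ∈ enteringEdges E (StrongComp E v))
    (hu : u ∉ StrongComp E v) (huv : Reachable E u v) : Reachable E u e.1 := by
  obtain ⟨k, huv⟩ := huv
  obtain ⟨e', he', s, -, -, hs, -⟩ := HasWalk.exists_enteringEdge huv hu (mem_strongComp_self E v)
  exact hE v he he' ▸ hs.reachable

theorem UniqueEntry.reachable_or_reachable (hE : UniqueEntry E) (hu : Reachable E u x)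
    (hv : Reachable E v x) : Reachable E u v ∨ Reachable E v u := by
  obtain ⟨k, hk⟩ := hu
  induction k using Nat.strong_induction_on generalizing x with
  | _ k ih =>
    by_cases hux : u ∈ StrongComp E x
    · exact Or.inr (hv.trans hux.1)
    by_cases hvx : v ∈ StrongComp E x
    · exact Or.inl (HasWalk.reachable hk |>.trans hvx.1)
    obtain ⟨e, he, s, t, rfl, hs, -⟩ := HasWalk.exists_enteringEdge hk hux (mem_strongComp_self E x)
    exact ih s (by omega) (hE.reachable_fst he hvx hv) hs

theorem UniqueEntry.exists_hasWalk_through (hE : UniqueEntry E) (hru : Reachable E r u)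
    (huv : Reachable E u v) (h : HasWalk E k r v) :
    ∃ y ∈ StrongComp E u, ∃ s t, k = s + t ∧ HasWalk E s r y ∧ HasWalk E t y v := by
  by_cases hur : Reachable E u r
  · exact ⟨r, ⟨hur, hru⟩, 0, k, k.zero_add.symm, hasWalk_zero.2 rfl, h⟩
  obtain ⟨⟨a, b⟩, ⟨hab, hua, hub⟩, s, t, rfl, hs, ht⟩ :=
    h.exists_enteringEdge (C := {x | Reachable E u x}) hur huv
  have hb : u ∈ StrongComp E b := by
    by_contra hu
    exact hua (hE.reachable_fst ⟨hab, fun ha => hua (hub.trans ha.1), mem_strongComp_self E b⟩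
      hu hub)
  exact ⟨b, hb.symm, s + 1, t, rfl, hasWalk_succ.2 ⟨a, hs, hab⟩, ht⟩

theorem HasWalk.modEq_of_reachable (hk : HasWalk E k u v) (hk' : HasWalk E k' u v)
    (hvu : Reachable E v u) (hM : ∀ m, HasWalk E m u u → M ∣ m) : k ≡ k' [MOD M] := by
  obtain ⟨s, hs⟩ := hvu
  have hclosed : ∀ m, HasWalk E m u v → m + s ≡ 0 [MOD M] :=
    fun m h => Nat.modEq_zero_iff_dvd.2 (hM _ (h.trans hs))
  exact Nat.ModEq.add_right_cancel' s ((hclosed k hk).trans (hclosed k' hk').symm)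

theorem UniqueEntry.modEq (hE : UniqueEntry E) (hk : HasWalk E k r v) (hk' : HasWalk E k' r v)
    (hM : ∀ x m, Reachable E x v → HasWalk E m x x → M ∣ m) : k ≡ k' [MOD M] := by
  induction k using Nat.strong_induction_on generalizing v k' with
  | _ k ih =>
    by_cases hr : r ∈ StrongComp E v
    · exact hk.modEq_of_reachable hk' hr.1 (hM r · hr.2)
    obtain ⟨e, he, s, t, rfl, hs, ht⟩ := hk.exists_enteringEdge hr (mem_strongComp_self E v)
    obtain ⟨e', he', s', t', rfl, hs', ht'⟩ :=
      hk'.exists_enteringEdge hr (mem_strongComp_self E v)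
    obtain rfl := hE v he he'
    have hout : s ≡ s' [MOD M] := ih s (by omega) hs hs' fun x m hx =>
      hM x m (hx.trans ((Reachable.of_mem he.1).trans ht.reachable))
    have hin : t ≡ t' [MOD M] := ht.modEq_of_reachable ht' he.2.2.1 (hM e.2 · ht.reachable)
    exact (hout.add_right 1).add hin

end UniqueEntry

theorem exists_lt_add_modEq {l : ℕ} (hl : 0 < l) (a b : ℕ) : ∃ k < l, a + k ≡ b [MOD l] := by
  refine ⟨(b + (l * a - a)) % l, Nat.mod_lt _ hl, ?_⟩
  calc a + (b + (l * a - a)) % l ≡ a + (b + (l * a - a)) [MOD l] := (Nat.mod_modEq _ _).add_left a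
    _ = b + l * a := by have := Nat.le_mul_of_pos_left a hl; omega
    _ ≡ b [MOD l] := by simp [Nat.ModEq]

section ComponentwiseReduced

variable {V : Type*} {E : Set (V × V)} {d k k' : ℕ} {r u u' v : V}

/-- The conditions on a reduced graph that concern one strong component at a time: each component is
entered by at most one edge, and each nontrivial one is a single cycle entered from the core.
Unlike `ReducedGraph` it makes sense for every digraph, without a distinguished root. -/
structure ComponentwiseReduced (E : Set (V × V)) : Prop where
  uniqueEntry : UniqueEntry E
  exists_entering_from_core : ∀ u, OnCycle E u →
    ∃ e ∈ enteringEdges E (StrongComp E u), e.1 ∉ CycSucc E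
  isSingleCycleOn : ∀ u, OnCycle E u → IsSingleCycleOn (StrongComp E u) E

namespace ComponentwiseReduced

theorem mem_strongComp_of_reachable (hE : ComponentwiseReduced E) (hu : OnCycle E u)
    (hv : OnCycle E v) (huv : Reachable E u v) : u ∈ StrongComp E v := by
  by_contra hne
  obtain ⟨e, he, hcore⟩ := hE.exists_entering_from_core v hv
  exact hcore ⟨u, hu, hE.uniqueEntry.reachable_fst he hne huv⟩

theorem strongComp_eq (hE : ComponentwiseReduced E) (hu : OnCycle E u) (hu' : OnCycle E u')
    (huv : Reachable E u v) (huv' : Reachable E u' v) : StrongComp E u = StrongComp E u' := by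
  rcases hE.uniqueEntry.reachable_or_reachable huv huv' with h | h
  · exact strongComp_eq_of_mem (hE.mem_strongComp_of_reachable hu hu' h)
  · exact (strongComp_eq_of_mem (hE.mem_strongComp_of_reachable hu' hu h)).symm

theorem modEq (hE : ComponentwiseReduced E) (hu : OnCycle E u) (huv : Reachable E u v)
    (hk : HasWalk E k r v) (hk' : HasWalk E k' r v) : k ≡ k' [MOD cycleLength E u] := by
  refine hE.uniqueEntry.modEq hk hk' fun x m hxv hx => ?_
  rcases eq_or_ne m 0 with rfl | hm
  · exact dvd_zero _
  have hxc : OnCycle E x := hx.onCycle hm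
  have hlen : cycleLength E u = cycleLength E x :=
    congrArg Set.ncard (hE.strongComp_eq hu hxc huv hxv)
  exact hlen ▸ (hE.isSingleCycleOn x hxc).cycleLength_dvd_iff.2 hx

-- The walk meets the cycle through `u`, where `m` full turns can be inserted.
theorem hasWalk_add_mul (hE : ComponentwiseReduced E) (hu : OnCycle E u) (hru : Reachable E r u)
    (huv : Reachable E u v) (hk : HasWalk E k r v) (m : ℕ) :
    HasWalk E (k + m * cycleLength E u) r v := by
  obtain ⟨y, hy, s, t, rfl, hs, ht⟩ := hE.uniqueEntry.exists_hasWalk_through hru huv hk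
  have hturn : HasWalk E (cycleLength E u) y y := by
    rw [← (hE.isSingleCycleOn y (hu.of_mem_strongComp hy)).cycleLength_dvd_iff, cycleLength,
      cycleLength, strongComp_eq_of_mem hy]
  rw [Nat.add_right_comm]
  exact (hs.trans (hturn.mul m)).trans ht

theorem hasWalk_iff_modEq (hE : ComponentwiseReduced E) (hu : OnCycle E u)
    (hru : Reachable E r u) (huv : Reachable E u v) (hd : HasWalk E d r v)
    (hdk : d < k + cycleLength E u) : HasWalk E k r v ↔ k ≡ d [MOD cycleLength E u] := by
  refine ⟨fun hk => hE.modEq hu huv hk hd, fun hkd => ?_⟩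
  have hle : d ≤ k := by
    by_contra! hlt
    have := hkd.add_le_of_lt hlt
    omega
  obtain ⟨m, hm⟩ := (Nat.modEq_iff_dvd' hle).1 hkd.symm
  rw [← Nat.add_sub_cancel' hle, hm, mul_comm]
  exact hE.hasWalk_add_mul hu hru huv hd m

theorem exists_hasWalk_modEq (hE : ComponentwiseReduced E) (hu : OnCycle E u)
    (hd : HasWalk E d r u) (a : ℕ) :
    ∃ v, Reachable E u v ∧ ∃ k, HasWalk E k r v ∧ k ≡ a [MOD cycleLength E u] := by
  have hcyc := hE.isSingleCycleOn u hu
  obtain ⟨t, -, ht⟩ := exists_lt_add_modEq hcyc.cycleLength_pos d a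
  obtain ⟨v, hv, huv⟩ := hcyc.exists_hasWalk t
  exact ⟨v, hv.1, d + t, hd.trans huv, ht⟩

section LongWalks

variable {dep : V → ℕ} {j L lmax : ℕ}

theorem hasWalk_add_iff (hE : ComponentwiseReduced E) (hdep : ∀ v, HasWalk E (dep v) r v)
    (hj : ∀ u v, OnCycle E u → Reachable E u v → dep v < j + cycleLength E u)
    (hu : OnCycle E u) (huv : Reachable E u v) (k : ℕ) :
    HasWalk E (j + k) r v ↔ j + k ≡ dep v [MOD cycleLength E u] :=
  hE.hasWalk_iff_modEq hu (hdep u).reachable huv (hdep v) (by have := hj u v hu huv; omega)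

theorem setOf_hasWalk_add_eq (hE : ComponentwiseReduced E) (hdep : ∀ v, HasWalk E (dep v) r v)
    (hj : ∀ u v, OnCycle E u → Reachable E u v → dep v < j + cycleLength E u)
    (hcore : (CoreOn Set.univ E \ {r}).encard < j)
    (hL : ∀ u, OnCycle E u → cycleLength E u ∣ L) :
    {v | HasWalk E (j + L) r v} = {v | HasWalk E j r v} := by
  have hperiod : ∀ v ∈ CycSucc E, HasWalk E (j + L) r v ↔ HasWalk E (j + 0) r v := by
    rintro v ⟨u, hu, huv⟩
    have hmod : j + L ≡ j + 0 [MOD cycleLength E u] :=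
      (Nat.modEq_zero_iff_dvd.2 (hL u hu)).add_left j
    rw [hE.hasWalk_add_iff hdep hj hu huv, hE.hasWalk_add_iff hdep hj hu huv]
    exact ⟨hmod.symm.trans, hmod.trans⟩
  ext v
  refine ⟨fun h => (hperiod v (h.mem_cycSucc (hcore.trans_le ?_))).1 h,
    fun h => (hperiod v (h.mem_cycSucc hcore)).2 h⟩
  exact_mod_cast j.le_add_right L

theorem cycSucc_eq_setOf_hasWalk (hE : ComponentwiseReduced E)
    (hdep : ∀ v, HasWalk E (dep v) r v)
    (hj : ∀ u v, OnCycle E u → Reachable E u v → dep v < j + cycleLength E u)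
    (hcore : (CoreOn Set.univ E \ {r}).encard < j)
    (hlmax : ∀ u, OnCycle E u → cycleLength E u ≤ lmax) :
    CycSucc E = {v | ∃ k < lmax, HasWalk E (j + k) r v} := by
  refine Set.Subset.antisymm ?_ fun v ⟨k, _, hk⟩ => hk.mem_cycSucc (hcore.trans_le ?_)
  · rintro v ⟨u, hu, huv⟩
    obtain ⟨k, hk, hmod⟩ :=
      exists_lt_add_modEq (hE.isSingleCycleOn u hu).cycleLength_pos j (dep v)
    exact ⟨k, hk.trans_le (hlmax u hu), (hE.hasWalk_add_iff hdep hj hu huv k).2 hmod⟩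
  · exact_mod_cast j.le_add_right k

theorem exists_hasWalk_add_forall_ne_not (hE : ComponentwiseReduced E)
    (hdep : ∀ v, HasWalk E (dep v) r v)
    (hj : ∀ u v, OnCycle E u → Reachable E u v → dep v < j + cycleLength E u)
    (hu : OnCycle E u) (hk : k < cycleLength E u) :
    ∃ v, HasWalk E (j + k) r v ∧ ∀ k' < cycleLength E u, k' ≠ k → ¬HasWalk E (j + k') r v := by
  obtain ⟨v, huv, m, hm, hmk⟩ := hE.exists_hasWalk_modEq hu (hdep u) (j + k)
  have hdepk : j + k ≡ dep v [MOD cycleLength E u] :=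
    hmk.symm.trans (hE.modEq hu huv hm (hdep v))
  refine ⟨v, (hE.hasWalk_add_iff hdep hj hu huv k).2 hdepk, fun k' hk' hne hwalk => hne ?_⟩
  have hkk' : k' ≡ k [MOD cycleLength E u] := Nat.ModEq.add_left_cancel' j
    (((hE.hasWalk_add_iff hdep hj hu huv k').1 hwalk).trans hdepk.symm)
  exact hkk'.eq_of_lt_of_lt hk' hk

end LongWalks

end ComponentwiseReduced

end ComponentwiseReduced

section Skeleton

variable {V W : Type*} {E : Set (V × V)} {A B : Set V} {u v : V}

theorem Reachable.of_skelEdges (h : Reachable (SkelEdges E) A B) (hA : A ∈ SkelNodes E)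
    (hu : u ∈ A) (hv : v ∈ B) : Reachable E u v := by
  obtain ⟨k, hk⟩ := h
  induction k generalizing B v with
  | zero =>
    obtain rfl := hasWalk_zero.1 hk
    rw [eq_strongComp_of_mem hA hu] at hv
    exact hv.1
  | succ k ih =>
    obtain ⟨D, hAD, -, hB, a, ha, b, hb, hab⟩ := hasWalk_succ.1 hk
    have hbv : v ∈ StrongComp E b := eq_strongComp_of_mem hB hb ▸ hv
    exact (ih ha hAD).trans ((Reachable.of_mem hab).trans hbv.1)

theorem Reachable.skelEdges (h : Reachable E u v) :
    Reachable (SkelEdges E) (StrongComp E u) (StrongComp E v) := by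
  obtain ⟨k, w, h0, hk, hw⟩ := h
  exact ⟨k, StrongComp E ∘ w, congrArg _ h0, congrArg _ hk,
    fun t ht => strongComp_pair_mem_skelEdges (hw t ht)⟩

theorem strongComp_mem_cycSucc_skelEdges (h : u ∈ CycSucc E) :
    StrongComp E u ∈ CycSucc (SkelEdges E) := by
  obtain ⟨x, hx, hxu⟩ := h
  exact ⟨StrongComp E x,
    onCycle_iff.2 ⟨_, onCycle_iff_strongComp_loop.1 hx, Reachable.refl _ _⟩, hxu.skelEdges⟩

theorem not_onCycle_loopless_skelEdges (E : Set (V × V)) (A : Set V) :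
    ¬OnCycle {p ∈ SkelEdges E | p.1 ≠ p.2} A := by
  rw [onCycle_iff]
  rintro ⟨B, ⟨⟨hA, hB, a, ha, b, hb, hab⟩, hne⟩, k, w, h0, hk, hw⟩
  have hba : Reachable E b a :=
    Reachable.of_skelEdges ⟨k, w, h0, hk, fun t ht => (hw t ht).1⟩ hB hb ha
  have hmem : b ∈ StrongComp E a := ⟨Reachable.of_mem hab, hba⟩
  exact hne <| calc
    A = StrongComp E a := eq_strongComp_of_mem hA ha
    _ = StrongComp E b := (strongComp_eq_of_mem hmem).symm
    _ = B := (eq_strongComp_of_mem hB hb).symm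

theorem IsDirectedTree.eq_of_mem_of_mem {N : Set W} {F : Set (W × W)} {a a' b : W}
    (h : IsDirectedTree N F) (hacyclic : ∀ x, ¬OnCycle F x) (ha : a ∈ N) (ha' : a' ∈ N)
    (hb : b ∈ N) (hab : (a, b) ∈ F) (hab' : (a', b) ∈ F) : a = a' := by
  obtain ⟨r, -, hpath, -⟩ := h
  have hcore : b ∉ CycSucc F := fun ⟨x, hx, _⟩ => hacyclic x hx
  obtain ⟨⟨k, w, hw, -⟩, -⟩ := hpath a ha
  obtain ⟨⟨k', w', hw', -⟩, -⟩ := hpath a' ha'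
  obtain ⟨hkk, hww⟩ := (hpath b hb).2 _ _ _ _ ((hw.snoc hab).isPath hcore)
    ((hw'.snoc hab').isPath hcore)
  obtain rfl : k = k' := Nat.succ_injective hkk
  simpa [hw.2.1, hw'.2.1] using hww k k.le_succ

theorem uniqueEntry_of_isDirectedTree
    (htree : IsDirectedTree (SkelNodes E) {p ∈ SkelEdges E | p.1 ≠ p.2})
    (hsingle : ∀ p ∈ SkelEdges E, p.1 ≠ p.2 → ∃! e : V × V, e ∈ E ∧ e.1 ∈ p.1 ∧ e.2 ∈ p.2) :
    UniqueEntry E := by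
  have hskel : ∀ {u}, ∀ e ∈ enteringEdges E (StrongComp E u),
      (StrongComp E e.1, StrongComp E u) ∈ {p ∈ SkelEdges E | p.1 ≠ p.2} := by
    rintro u e ⟨he, hout, hin⟩
    refine ⟨strongComp_eq_of_mem hin ▸ strongComp_pair_mem_skelEdges he, fun heq => hout ?_⟩
    change StrongComp E e.1 = StrongComp E u at heq
    exact heq ▸ mem_strongComp_self E e.1
  intro u e he e' he'
  have hcomp : StrongComp E e.1 = StrongComp E e'.1 :=
    htree.eq_of_mem_of_mem (not_onCycle_loopless_skelEdges E) ⟨_, rfl⟩ ⟨_, rfl⟩ ⟨_, rfl⟩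
      (hskel e he) (hskel e' he')
  exact (hsingle _ (hskel e he).1 (hskel e he).2).unique
    ⟨he.1, mem_strongComp_self E e.1, he.2.2⟩
    ⟨he'.1, hcomp ▸ mem_strongComp_self E e'.1, he'.2.2⟩

theorem ReducedGraph.componentwiseReduced {n : ℕ} {E : Set (Node n × Node n)}
    (h : ReducedGraph n E) : ComponentwiseReduced E := by
  obtain ⟨-, htree, -, hsingle, hloop⟩ := h
  refine ⟨uniqueEntry_of_isDirectedTree htree hsingle, fun u hu => ?_,
    fun u hu => (hloop _ (onCycle_iff_strongComp_loop.1 hu)).2⟩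
  obtain ⟨⟨C, ⟨hC, hCcore⟩, -, -, a, ha, b, hb, hab⟩, -⟩ :=
    hloop _ (onCycle_iff_strongComp_loop.1 hu)
  have hcore : a ∉ CycSucc E := fun hmem =>
    hCcore (eq_strongComp_of_mem hC ha ▸ strongComp_mem_cycSucc_skelEdges hmem)
  exact ⟨(a, b), ⟨hab, fun hau => hcore ⟨u, hu, hau.1⟩, hb⟩, hcore⟩

end Skeleton

theorem stmt12_general {V ι : Type*} {E : Set (V × V)} (hE : ComponentwiseReduced E)
    {Gp : ι → Set V}
    (hGp : ∀ C : Set V, (C ∈ SkelNodes E ∧ (C, C) ∈ SkelEdges E) ↔ ∃ p, Gp p = C)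
    {l : ι → ℕ} {c : ι → ℕ → V} {u0 : ι → V} (hu0 : ∀ p, u0 p ∈ Gp p)
    (hcyc : ∀ p, IsCycle E (l p) (c p) (u0 p))
    (hcycset : ∀ p, {x | ∃ t < l p, c p t = x} = Gp p)
    {r : V} {dep : V → ℕ} (hdep : ∀ v, HasWalk E (dep v) r v)
    {lmax : ℕ} (hlmax : IsGreatest (Set.range l) lmax) {L : ℕ} (hL : ∀ p, l p ∣ L) {j : ℕ}
    (hjcore : (CoreOn Set.univ E \ {r}).encard < j)
    (hjdep : ∀ p, ∀ u ∈ Gp p, ∀ v, Reachable E u v → dep v < j + l p) :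
    {v | HasWalk E (j + L) r v} = {v | HasWalk E j r v} ∧
    CycSucc E = {v | ∃ k < lmax, HasWalk E (j + k) r v} ∧
    ∀ k < lmax, ∃ v, HasWalk E (j + k) r v ∧
      ∀ k' < lmax, k' ≠ k → ¬HasWalk E (j + k') r v := by
  have hG (p : ι) : Gp p = StrongComp E (u0 p) :=
    eq_strongComp_of_mem ((hGp _).2 ⟨p, rfl⟩).1 (hu0 p)
  have hlen (p : ι) : cycleLength E (u0 p) = l p :=
    (hcyc p).cycleLength_eq ((hcycset p).trans (hG p))
  have hcover (u : V) (hu : OnCycle E u) : ∃ p, u ∈ Gp p ∧ cycleLength E u = l p := by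
    obtain ⟨p, hp⟩ := (hGp _).1 ⟨⟨u, rfl⟩, onCycle_iff_strongComp_loop.1 hu⟩
    exact ⟨p, hp ▸ mem_strongComp_self E u, by rw [← hlen, cycleLength, cycleLength, ← hG, hp]⟩
  have hj (u v : V) (hu : OnCycle E u) (huv : Reachable E u v) : dep v < j + cycleLength E u := by
    obtain ⟨p, hup, hp⟩ := hcover u hu
    exact hp ▸ hjdep p u hup v huv
  refine ⟨hE.setOf_hasWalk_add_eq hdep hj hjcore fun u hu => ?_,
    hE.cycSucc_eq_setOf_hasWalk hdep hj hjcore fun u hu => ?_, ?_⟩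
  · obtain ⟨p, -, hp⟩ := hcover u hu
    exact hp ▸ hL p
  · obtain ⟨p, -, hp⟩ := hcover u hu
    exact hp ▸ hlmax.2 ⟨p, rfl⟩
  · obtain ⟨⟨p, rfl⟩, -⟩ := hlmax
    rw [← hlen p]
    exact fun k hk => hE.exists_hasWalk_add_forall_ne_not hdep hj ⟨l p, c p, hcyc p⟩ hk

/-- Lemma 5 of the paper: in a reduced graph with nontrivial strong
components `G_1, …, G_q` (directed cycles of lengths `ℓ_1, …, ℓ_q`), for every `j`
with `j > n*` and `j > d_p − ℓ_p` for all `p`: (a) `V(j + L) = V(j)` where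
`L = lcm(ℓ_1, …, ℓ_q)`; (b) `V⁺_cyc = V(j) ∪ … ∪ V(j + ℓ_max − 1)`; and (c) no
`V(j + k)` is contained in the union of the others. -/
theorem stmt12 {n : ℕ} (hn : 1 ≤ n) (E : Set (Node n × Node n))
    (hred : ReducedGraph n E)
    (q : ℕ) (hq : 1 ≤ q) (Gp : Fin q → Set (Node n))
    (hGp : ∀ C : Set (Node n),
      (C ∈ SkelNodes E ∧ (C, C) ∈ SkelEdges E) ↔ ∃ p : Fin q, Gp p = C)
    (hGpinj : Function.Injective Gp)
    (l : Fin q → ℕ) (c : Fin q → ℕ → Node n) (u0 : Fin q → Node n)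
    (hu0 : ∀ p, u0 p ∈ Gp p)
    (hcyc : ∀ p, IsCycle E (l p) (c p) (u0 p))
    (hcycset : ∀ p, {x | ∃ t < l p, c p t = x} = Gp p)
    (dep : Node n → ℕ)
    (hdep : ∀ v : Node n, ∃ pth : ℕ → Node n, IsPath E (dep v) pth (none : Node n) v)
    (dps : Fin q → ℕ)
    (hdps : ∀ p, IsGreatest {d : ℕ | ∃ v ∈ VpPlus E (Gp p), dep v = d} (dps p))
    (lmax : ℕ) (hlmax : IsGreatest (Set.range l) lmax)
    (L : ℕ) (hL : L = Finset.univ.lcm l)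
    (nstar : ℕ) (hnstar : nstar = ((CoreNodes n E) \ {(none : Node n)}).ncard)
    (j : ℕ) (hjn : nstar < j) (hjd : ∀ p, (dps p : ℤ) - (l p : ℤ) < (j : ℤ)) :
    VSet E (j + L) = VSet E j ∧
    CycSucc E = {v : Node n | ∃ k < lmax, v ∈ VSet E (j + k)} ∧
    ∀ k < lmax, ∃ v ∈ VSet E (j + k),
      ∀ k' < lmax, k' ≠ k → v ∉ VSet E (j + k') := by
  refine stmt12_general hred.componentwiseReduced hGp hu0 hcyc hcycset
    (fun v => (hdep v).imp fun _ => And.left) hlmax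
    (fun p => hL ▸ Finset.dvd_lcm (Finset.mem_univ p)) ?_ fun p u hu v huv => ?_
  · rw [← (Set.toFinite _).cast_ncard_eq]
    exact_mod_cast hnstar ▸ hjn
  · have hdepth : dep v ≤ dps p := (hdps p).2 ⟨v, ⟨u, hu, huv⟩, rfl⟩
    have hjp := hjd p
    omega
end

section
/- Let Σ be a topological space, μ a Borel probability measure on Σ, and f : Σ → ℝ a continuous function with 0 ≤ f(σ) ≤ 1 for all σ, such that μ(f⁻¹(W)) > 0 for every open subset W of ℝ with W ∩ [0,1] nonempty. Let r_1, …, r_m be pairwise distinct nonnegative real numbers. If v = (v_1, …, v_m) ∈ ℝ^m satisfies Σ_{j=1}^m v_j ∫_Σ f(σ)^{r_j + k} dμ(σ) = 0 for every k ∈ ℕ, then v = 0. Equivalently, the matrix with rows indexed by j = 1, …, m, columns indexed by k ∈ ℕ, and entries ∫_Σ f^{r_j + k} dμ has linearly independent rows. -/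
open MeasureTheory

/-!
Write `g t = ∑ j, v j * t ^ r j`. The hypothesis says that `g ∘ f` is orthogonal in `L²(μ)` to every
polynomial in `f`; since `g` is a uniform limit of polynomials on a compact interval containing the
range of `f`, it is orthogonal to itself, so `g` vanishes on the support of the pushforward of `μ`
under `f`. Dividing by one of the powers and differentiating removes one term from `g` and, by
Rolle's theorem, at most one positive zero; hence a nonzero `g` with `m` terms has fewer than `m`
positive zeros.
-/

section GeneralizedVandermonde

theorem exists_strictMono_hasDerivAt_eq_zero {n : ℕ} {s : Set ℝ} (hs : s.OrdConnected)
    {F F' : ℝ → ℝ} (hF : ∀ t ∈ s, HasDerivAt F (F' t) t) {x : Fin (n + 1) → ℝ}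
    (hx : StrictMono x) (hxs : ∀ i, x i ∈ s) {c : ℝ} (hc : ∀ i, F (x i) = c) :
    ∃ y : Fin n → ℝ, StrictMono y ∧ ∀ i, y i ∈ s ∧ F' (y i) = 0 := by
  have hsub (i : Fin n) : Set.Icc (x i.castSucc) (x i.succ) ⊆ s := hs.out (hxs _) (hxs _)
  have rolle (i : Fin n) : ∃ y ∈ Set.Ioo (x i.castSucc) (x i.succ), F' y = 0 :=
    exists_hasDerivAt_eq_zero (hx i.castSucc_lt_succ)
      (fun t ht ↦ (hF t (hsub i ht)).continuousAt.continuousWithinAt)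
      ((hc _).trans (hc _).symm)
      (fun t ht ↦ hF t (hsub i (Set.Ioo_subset_Icc_self ht)))
  choose y hy hy0 using rolle
  refine ⟨y, fun i j hij ↦ ?_, fun i ↦ ⟨hsub i (Set.Ioo_subset_Icc_self (hy i)), hy0 i⟩⟩
  calc y i < x i.succ := (hy i).2
    _ ≤ x j.castSucc := hx.monotone (Fin.succ_le_castSucc_iff.mpr hij)
    _ < y j := (hy j).1

theorem eq_zero_of_sum_mul_rpow_eq_zero_of_strictMono {n : ℕ} {x r v : Fin n → ℝ}
    (hx : StrictMono x) (hxpos : ∀ i, 0 < x i) (hr : Function.Injective r)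
    (h : ∀ i, ∑ j, v j * x i ^ r j = 0) : v = 0 := by
  induction n with
  | zero => exact Subsingleton.elim _ _
  | succ n ih =>
    have hdiv (i : Fin (n + 1)) : ∑ j : Fin n, v j.succ * x i ^ (r j.succ - r 0) = -v 0 := by
      have hsum : v 0 * x i ^ r 0 + ∑ j : Fin n, v j.succ * x i ^ r j.succ = 0 := by
        rw [← Fin.sum_univ_succ fun j ↦ v j * x i ^ r j, h i]
      have hpow : x i ^ r 0 ≠ 0 := (Real.rpow_pos_of_pos (hxpos i) _).ne'
      simp only [Real.rpow_sub (hxpos i), ← mul_div_assoc, ← Finset.sum_div]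
      rw [div_eq_iff hpow]
      linarith
    have hderiv (t : ℝ) (ht : t ∈ Set.Ioi (0 : ℝ)) :
        HasDerivAt (fun t ↦ ∑ j : Fin n, v j.succ * t ^ (r j.succ - r 0))
          (∑ j : Fin n, v j.succ * ((r j.succ - r 0) * t ^ (r j.succ - r 0 - 1))) t :=
      HasDerivAt.fun_sum fun j _ ↦
        (Real.hasDerivAt_rpow_const (.inl (Set.mem_Ioi.mp ht).ne')).const_mul (v j.succ)
    obtain ⟨y, hy, hyzero⟩ :=
      exists_strictMono_hasDerivAt_eq_zero Set.ordConnected_Ioi hderiv hx hxpos hdiv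
    have hcoeff : (fun j : Fin n ↦ v j.succ * (r j.succ - r 0)) = 0 := by
      refine ih (r := fun j ↦ r j.succ - r 0 - 1) hy (fun i ↦ (hyzero i).1)
        (fun i j hij ↦ Fin.succ_injective n (hr (by linarith))) fun i ↦ ?_
      simpa only [mul_assoc] using (hyzero i).2
    have hsucc (j : Fin n) : v j.succ = 0 :=
      (mul_eq_zero.mp (congrFun hcoeff j)).resolve_right
        (sub_ne_zero.mpr (hr.ne (Fin.succ_ne_zero j)))
    have hzero : v 0 = 0 := by simpa [hsucc] using hdiv 0
    exact funext (Fin.cases hzero hsucc)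

theorem eq_zero_of_sum_mul_rpow_eq_zero {ι : Type*} [Fintype ι] {s : Set ℝ}
    (hs : s ⊆ Set.Ioi 0) (hcard : (Fintype.card ι : ℕ∞) ≤ s.encard) {r v : ι → ℝ}
    (hr : Function.Injective r) (h : ∀ t ∈ s, ∑ j, v j * t ^ r j = 0) : v = 0 := by
  obtain ⟨s', hs's, hs'⟩ := Set.exists_subset_encard_eq hcard
  lift s' to Finset ℝ using Set.finite_of_encard_eq_coe hs'
  rw [Set.encard_coe_eq_coe_finsetCard, Nat.cast_inj] at hs'
  let x := s'.orderEmbOfFin hs'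
  have hx (i : Fin (Fintype.card ι)) : x i ∈ s := hs's (s'.orderEmbOfFin_mem hs' i)
  let e := (Fintype.equivFin ι).symm
  have hve : v ∘ e = 0 :=
    eq_zero_of_sum_mul_rpow_eq_zero_of_strictMono x.strictMono (fun i ↦ hs (hx i))
      (hr.comp e.injective) fun i ↦ (e.sum_comp fun j ↦ v j * x i ^ r j).trans (h _ (hx i))
  exact e.surjective.injective_comp_right hve

end GeneralizedVandermonde

section Moments

variable {ν : Measure ℝ} {g : ℝ → ℝ} {a b : ℝ}

theorem integrable_of_continuousOn_of_ae_mem_Icc [IsFiniteMeasureOnCompacts ν]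
    (hν : ∀ᵐ t ∂ν, t ∈ Set.Icc a b) (hg : ContinuousOn g (Set.Icc a b)) : Integrable g ν := by
  rw [← Measure.restrict_eq_self_of_ae_mem hν]
  exact hg.integrableOn_Icc

theorem integral_mul_polynomial_eq_zero (hint : ∀ k : ℕ, Integrable (fun t ↦ g t * t ^ k) ν)
    (hmom : ∀ k : ℕ, ∫ t, g t * t ^ k ∂ν = 0) (p : Polynomial ℝ) :
    ∫ t, g t * p.eval t ∂ν = 0 := by
  simp only [Polynomial.eval_eq_sum_range, Finset.mul_sum, mul_left_comm (g _)]
  rw [integral_finsetSum _ fun k _ ↦ (hint k).const_mul _]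
  simp only [integral_const_mul, hmom, mul_zero, Finset.sum_const_zero]

theorem integral_sq_eq_zero_of_moments_eq_zero [IsFiniteMeasure ν]
    (hν : ∀ᵐ t ∂ν, t ∈ Set.Icc a b) (hg : ContinuousOn g (Set.Icc a b))
    (hmom : ∀ k : ℕ, ∫ t, g t * t ^ k ∂ν = 0) : ∫ t, g t ^ 2 ∂ν = 0 := by
  have hint {h : ℝ → ℝ} (hh : ContinuousOn h (Set.Icc a b)) : Integrable h ν :=
    integrable_of_continuousOn_of_ae_mem_Icc hν hh
  have hbound (ε : ℝ) (hε : 0 < ε) : ∫ t, g t ^ 2 ∂ν ≤ ν.real Set.univ * ε ^ 2 := by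
    obtain ⟨p, hp⟩ := exists_polynomial_near_of_continuousOn a b g hg ε hε
    have horth : ∫ t, g t * p.eval t ∂ν = 0 :=
      integral_mul_polynomial_eq_zero (fun k ↦ hint (by fun_prop)) hmom p
    calc ∫ t, g t ^ 2 ∂ν
        ≤ ∫ t, (g t ^ 2 + p.eval t ^ 2) ∂ν :=
          integral_mono (hint (by fun_prop)) (hint (by fun_prop))
            fun t ↦ le_add_of_nonneg_right (sq_nonneg _)
      _ = ∫ t, (g t ^ 2 + p.eval t ^ 2) ∂ν - 2 * ∫ t, g t * p.eval t ∂ν := by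
          rw [horth, mul_zero, sub_zero]
      _ = ∫ t, (p.eval t - g t) ^ 2 ∂ν := by
          rw [← integral_const_mul, ← integral_sub (hint (by fun_prop)) (hint (by fun_prop))]
          congr with t
          ring
      _ ≤ ∫ _, ε ^ 2 ∂ν := by
          refine integral_mono_ae (hint (by fun_prop)) (integrable_const _) ?_
          filter_upwards [hν] with t ht
          exact sq_le_sq' (abs_lt.mp (hp t ht)).1.le (abs_lt.mp (hp t ht)).2.le
      _ = ν.real Set.univ * ε ^ 2 := by rw [integral_const, smul_eq_mul]
  have hlim : Filter.Tendsto (fun ε : ℝ ↦ ν.real Set.univ * ε ^ 2) (nhdsWithin 0 (Set.Ioi 0))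
      (nhds 0) := by
    refine Filter.Tendsto.mono_left ?_ nhdsWithin_le_nhds
    exact Continuous.tendsto' (by fun_prop) _ _ (by simp)
  exact le_antisymm (ge_of_tendsto hlim (eventually_mem_nhdsWithin.mono hbound))
    (integral_nonneg fun t ↦ sq_nonneg (g t))

theorem eqOn_support_zero_of_moments_eq_zero [IsFiniteMeasure ν]
    (hν : ∀ᵐ t ∂ν, t ∈ Set.Icc a b) (hg : ContinuousOn g (Set.Icc a b))
    (hmom : ∀ k : ℕ, ∫ t, g t * t ^ k ∂ν = 0) : Set.EqOn g 0 ν.support := by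
  have hsq : (fun t ↦ g t ^ 2) =ᵐ[ν] 0 :=
    (integral_eq_zero_iff_of_nonneg (fun t ↦ sq_nonneg (g t))
      (integrable_of_continuousOn_of_ae_mem_Icc hν (hg.pow 2))).mp
      (integral_sq_eq_zero_of_moments_eq_zero hν hg hmom)
  have hclosed : IsClosed (Set.Icc a b ∩ g ⁻¹' {0}) :=
    hg.preimage_isClosed_of_isClosed isClosed_Icc isClosed_singleton
  have hconull : Set.Icc a b ∩ g ⁻¹' {0} ∈ ae ν := by
    filter_upwards [hν, hsq] with t ht hgt
    exact ⟨ht, pow_eq_zero_iff two_ne_zero |>.mp hgt⟩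
  exact fun t ht ↦ (Measure.support_subset_of_isClosed hclosed hconull ht).2

theorem linearIndependent_integral_rpow_add_natCast {ι : Type*} [Fintype ι] [IsFiniteMeasure ν]
    (hν : ∀ᵐ t ∂ν, t ∈ Set.Icc 0 b)
    (hcard : (Fintype.card ι : ℕ∞) ≤ (ν.support ∩ Set.Ioi 0).encard)
    {r : ι → ℝ} (hr : ∀ j, 0 ≤ r j) (hrinj : Function.Injective r) :
    LinearIndependent ℝ fun (j : ι) (k : ℕ) ↦ ∫ t, t ^ (r j + (k : ℝ)) ∂ν := by
  refine Fintype.linearIndependent_iff.mpr fun v hv ↦ congrFun ?_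
  have hcont (j : ι) : Continuous fun t : ℝ ↦ t ^ r j := Real.continuous_rpow_const (hr j)
  have hmom (k : ℕ) : ∫ t, (∑ j, v j * t ^ r j) * t ^ k ∂ν = 0 :=
    calc ∫ t, (∑ j, v j * t ^ r j) * t ^ k ∂ν
        = ∫ t, ∑ j, v j * t ^ (r j + (k : ℝ)) ∂ν := by
          refine integral_congr_ae ?_
          filter_upwards [hν] with t ht
          simp only [Real.rpow_add_of_nonneg ht.1 (hr _) k.cast_nonneg, Real.rpow_natCast,
            Finset.sum_mul, mul_assoc]
      _ = ∑ j, v j * ∫ t, t ^ (r j + (k : ℝ)) ∂ν := by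
          rw [integral_finsetSum _ fun j _ ↦ integrable_of_continuousOn_of_ae_mem_Icc hν
            ((Real.continuous_rpow_const (add_nonneg (hr j) k.cast_nonneg)).const_mul
              (v j)).continuousOn]
          simp only [integral_const_mul]
      _ = 0 := by simpa using congrFun hv k
  have hzero : Set.EqOn (fun t ↦ ∑ j, v j * t ^ r j) 0 ν.support :=
    eqOn_support_zero_of_moments_eq_zero hν (by fun_prop) hmom
  exact eq_zero_of_sum_mul_rpow_eq_zero Set.inter_subset_right hcard hrinj
    fun t ht ↦ hzero ht.1

end Moments

theorem subset_support_map {S X : Type*} [MeasurableSpace S] [TopologicalSpace X]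
    [MeasurableSpace X] [OpensMeasurableSpace X] {μ : Measure S} {f : S → X}
    (hf : AEMeasurable f μ) {A : Set X}
    (hA : ∀ W : Set X, IsOpen W → (W ∩ A).Nonempty → 0 < μ (f ⁻¹' W)) :
    A ⊆ (μ.map f).support := by
  intro x hx
  rw [Measure.support_eq_forall_isOpen]
  intro W hxW hW
  rw [Measure.map_apply_of_aemeasurable hf hW.measurableSet]
  exact hA W hW ⟨x, hxW, hx⟩

theorem stmt15_general {S ι : Type*} [MeasurableSpace S] [Fintype ι]
    {μ : Measure S} [IsFiniteMeasure μ] {f : S → ℝ} {b : ℝ} (hf : AEMeasurable f μ)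
    (hfb : ∀ᵐ σ ∂μ, f σ ∈ Set.Icc 0 b)
    (hcard : (Fintype.card ι : ℕ∞) ≤ ((μ.map f).support ∩ Set.Ioi 0).encard)
    {r : ι → ℝ} (hr : ∀ j, 0 ≤ r j) (hrinj : Function.Injective r) :
    LinearIndependent ℝ fun (j : ι) (k : ℕ) ↦ ∫ σ, f σ ^ (r j + (k : ℝ)) ∂μ := by
  have hmap (j : ι) (k : ℕ) :
      ∫ t, t ^ (r j + (k : ℝ)) ∂(μ.map f) = ∫ σ, f σ ^ (r j + (k : ℝ)) ∂μ :=
    integral_map hf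
      (Real.continuous_rpow_const (add_nonneg (hr j) k.cast_nonneg)).aestronglyMeasurable
  simpa only [hmap] using linearIndependent_integral_rpow_add_natCast
    ((ae_map_iff hf measurableSet_Icc).mpr hfb) hcard hr hrinj

theorem encard_inter_Ioi_eq_top_of_Icc_subset {s : Set ℝ} (hs : Set.Icc 0 1 ⊆ s) :
    (s ∩ Set.Ioi 0).encard = ⊤ :=
  Set.encard_eq_top_iff.mpr <| (Set.Ioc_infinite zero_lt_one).mono
    fun _ ht ↦ ⟨hs (Set.Ioc_subset_Icc_self ht), ht.1⟩

/-- abstract form of Lemma 8 of the paper: if `f : Σ → [0,1]` is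
continuous and the pushforward of the probability measure `μ` under `f` has full
support in `[0,1]`, then for pairwise distinct nonnegative exponents `r_1, …, r_m`, the
only `v ∈ ℝ^m` with `∑_j v_j ∫ f^{r_j + k} dμ = 0` for all `k ∈ ℕ` is `v = 0`; i.e.
the moment matrix `(∫ f^{r_j + k} dμ)_{j,k}` has linearly independent rows. -/
theorem stmt15 (S : Type*) [TopologicalSpace S] [MeasurableSpace S] [BorelSpace S]
    (μ : Measure S) [IsProbabilityMeasure μ]
    (f : S → ℝ) (hf : Continuous f) (hf01 : ∀ σ, f σ ∈ Set.Icc (0 : ℝ) 1)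
    (hfull : ∀ W : Set ℝ, IsOpen W → (W ∩ Set.Icc (0 : ℝ) 1).Nonempty →
      0 < μ (f ⁻¹' W))
    (m : ℕ) (r : Fin m → ℝ) (hr : ∀ j, 0 ≤ r j) (hrinj : Function.Injective r)
    (v : Fin m → ℝ)
    (hv : ∀ k : ℕ, ∑ j : Fin m, v j * ∫ σ, f σ ^ (r j + (k : ℝ)) ∂μ = 0) :
    v = 0 := by
  have hsupp : Set.Icc 0 1 ⊆ (μ.map f).support := subset_support_map hf.aemeasurable hfull
  exact funext <| Fintype.linearIndependent_iff.mp
    (stmt15_general hf.aemeasurable (.of_forall hf01)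
      (le_top.trans_eq (encard_inter_Ioi_eq_top_of_Icc_subset hsupp).symm) hr hrinj)
    v (funext fun k ↦ by simpa using hv k)
end
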